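/- Suppose ρ₀ : ℝ → ℝ is twice continuously differentiable with ρ₀''(z) = f(ρ₀(z)) for all z ∈ ℝ, ρ₀'(z) > 0 for all z ∈ ℝ, lim_{z→−∞} ρ₀(z) = a, lim_{z→+∞} ρ₀(z) = b, and lim_{z→−∞} ρ₀'(z) = 0. Then a < ρ₀(z) < b for all z ∈ ℝ and ρ₀'(z) = (√2/2)(ρ₀(z)² − a²)(b² − ρ₀(z)²) for all z ∈ ℝ. -/

import Mathlib

open Filter

/-- If `ρ₀` is `C²` with `ρ₀'' = f(ρ₀)`, `ρ₀' > 0`, `ρ₀(−∞) = a`,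
`ρ₀(+∞) = b` and `ρ₀'(−∞) = 0`, then `a < ρ₀ < b` and
`ρ₀' = (√2/2)(ρ₀² − a²)(b² − ρ₀²)` everywhere. -/
theorem statement3 (a b : ℝ) (ha : 0 < a) (hab : a < b) (ρ₀ : ℝ → ℝ)
    (hreg : ContDiff ℝ 2 ρ₀)
    (hode : ∀ z, deriv (deriv ρ₀) z =
      ((ρ₀ z) ^ 2 - a ^ 2) * ((ρ₀ z) ^ 2 - b ^ 2)
        * (2 * (ρ₀ z) ^ 2 - a ^ 2 - b ^ 2) * ρ₀ z)
    (hpos : ∀ z, 0 < deriv ρ₀ z)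
    (hbot : Tendsto ρ₀ atBot (nhds a))
    (htop : Tendsto ρ₀ atTop (nhds b))
    (hdbot : Tendsto (deriv ρ₀) atBot (nhds 0)) :
    ∀ z, (a < ρ₀ z ∧ ρ₀ z < b) ∧
      deriv ρ₀ z = Real.sqrt 2 / 2 * ((ρ₀ z) ^ 2 - a ^ 2) * (b ^ 2 - (ρ₀ z) ^ 2) := by
  have hd1 : Differentiable ℝ ρ₀ := hreg.differentiable (by norm_num)
  have hd2 : Differentiable ℝ (deriv ρ₀) := by
    have h : ContDiff ℝ (1 + 1) ρ₀ := by
      rw [one_add_one_eq_two]; exact hreg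
    exact (contDiff_succ_iff_deriv.1 h).2.2.differentiable (by norm_num)
  have hmono : StrictMono ρ₀ := strictMono_of_deriv_pos hpos
  have hlo : ∀ z, a < ρ₀ z := fun z =>
    lt_of_le_of_lt (hmono.monotone.le_of_tendsto hbot (z - 1)) (hmono (by linarith))
  have hhi : ∀ z, ρ₀ z < b := fun z =>
    lt_of_lt_of_le (hmono (by linarith)) (hmono.monotone.ge_of_tendsto htop (z + 1))
  let E : ℝ → ℝ := fun z =>
    (deriv ρ₀ z) ^ 2 - 1 / 2 * (((ρ₀ z) ^ 2 - a ^ 2) * ((ρ₀ z) ^ 2 - b ^ 2)) ^ 2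
  have hE : ∀ z, HasDerivAt E 0 z := by
    intro z
    have h1 := (hd1 z).hasDerivAt
    have h2 := (hd2 z).hasDerivAt
    have h3 := (h2.pow 2).sub
      (((((h1.pow 2).sub_const (a ^ 2)).mul ((h1.pow 2).sub_const (b ^ 2))).pow 2).const_mul (1 / 2))
    refine h3.congr_deriv ?_
    rw [hode z]
    simp
    ring
  have hconst : ∀ x y, E x = E y :=
    is_const_of_deriv_eq_zero (fun z => (hE z).differentiableAt) (fun z => (hE z).deriv)
  have hlim : Tendsto E atBot (nhds 0) := by
    have h := (hdbot.pow 2).sub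
      (((((hbot.pow 2).sub_const (a ^ 2)).mul ((hbot.pow 2).sub_const (b ^ 2))).pow 2).const_mul (1 / 2))
    simpa [E] using h
  intro z
  have hz : E z = 0 := by
    have h : Tendsto E atBot (nhds (E z)) := by
      have : E = fun _ => E z := funext fun x => hconst x z
      rw [this]; exact tendsto_const_nhds
    exact tendsto_nhds_unique h hlim
  refine ⟨⟨hlo z, hhi z⟩, ?_⟩
  have p1 : 0 < (ρ₀ z) ^ 2 - a ^ 2 := by nlinarith [hlo z]
  have p2 : 0 < b ^ 2 - (ρ₀ z) ^ 2 := by nlinarith [hlo z, hhi z]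
  have hs : Real.sqrt 2 ^ 2 = 2 := Real.sq_sqrt (by norm_num)
  refine (pow_left_inj₀ (hpos z).le (by positivity) two_ne_zero).1 ?_
  simp only [E] at hz
  have : (Real.sqrt 2 / 2 * ((ρ₀ z) ^ 2 - a ^ 2) * (b ^ 2 - (ρ₀ z) ^ 2)) ^ 2
      = Real.sqrt 2 ^ 2 / 4 * (((ρ₀ z) ^ 2 - a ^ 2) * ((ρ₀ z) ^ 2 - b ^ 2)) ^ 2 := by ring
  rw [this, hs]
  linarith
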